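/- Under the setup below, let u₁ and u₂ be two classical solutions with the same initial datum φ ∈ L²(D), where for i = 1, 2 the source coefficient h_i is defined from u_i by the quotient formula in the setup, and assume t ↦ ‖u₁(t,·,·) − u₂(t,·,·)‖²_{L²(D)} is absolutely continuous on [0,T]. Then u₁(t,x,y) = u₂(t,x,y) for all t ∈ [0,T] and almost all (x,y) ∈ D, and consequently h₁(t,x) = h₂(t,x) for all t ∈ [0,T] and all x ∈ G. -/

import Mathlib

open MeasureTheory Real

/-!
The proof is an energy argument for the difference `w = u₁ - u₂`, whose initial value is `0`.

Multiply the equation for `w` by `w` and integrate over `D`. Integration by parts turns the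
second-order terms into `-‖∇w‖²`. The nonlinearity is Lipschitz, and the two sources `f hᵢ` differ
by at most a constant times `∫₀^π (ℓ₀ |w| + |w_y|) dy` (`source_bound`), so Young's inequality
absorbs `w_y` into `-‖w_y‖²`. The result is `∫_D w D^α w ≤ C ‖w‖²` (`energy_estimate`).

On the left, Alikhanov's inequality (`alikhanov`) `w D^α w ≥ ½ D^α (w²)` applies pointwise in
`(x, y)`. The fractional integral `I^α` of this inequality, computed by Fubini and the kernel
identity `∫_τ^t (t - s)^(α - 1) (s - τ)^(-α) ds = B(1 - α, α)` (`kernel_integral`), gives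
`N(t) ≤ C' ∫₀ᵗ (t - s)^(α - 1) N(s) ds` for `N(t) = ‖w(t)‖²` (`energy_volterra`). A Gronwall
argument with an exponential weight (`fractional_gronwall`) forces `N = 0`. By continuity
`u₁ = u₂` everywhere, and `h₁ = h₂` follows from the quotient formula.
-/

/-- Riemann–Liouville fractional integral of order `α` (with base point `0`). -/
noncomputable def rlInt (α : ℝ) (v : ℝ → ℝ) (t : ℝ) : ℝ :=
  (1 / Real.Gamma α) * ∫ τ in (0:ℝ)..t, (t - τ) ^ (α - 1) * v τ

/-- Caputo fractional derivative of order `α ∈ (0,1)` of an absolutely continuous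
function whose a.e. derivative is `v'`. -/
noncomputable def caputo (α : ℝ) (v' : ℝ → ℝ) (t : ℝ) : ℝ :=
  (1 / Real.Gamma (1 - α)) * ∫ τ in (0:ℝ)..t, (t - τ) ^ (-α) * v' τ

/-- Two-parameter Mittag-Leffler function (real arguments). -/
noncomputable def mittagLeffler (ρ μ z : ℝ) : ℝ :=
  ∑' k : ℕ, z ^ k / Real.Gamma (ρ * k + μ)

/-- The `L²(0,π)` inner product `(p,q) = ∫_0^π p q dy`. -/
noncomputable def l2ip (p q : ℝ → ℝ) : ℝ := ∫ y in Set.Ioo (0:ℝ) π, p y * q y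

/-- The squared `L²(0,π)` norm `‖p‖² = ∫_0^π p² dy`. -/
noncomputable def l2sq (p : ℝ → ℝ) : ℝ := ∫ y in Set.Ioo (0:ℝ) π, (p y) ^ 2

/-! ### The kernel identity behind fractional integration -/

/-- The Beta constant `B(1 - α, α)`. -/
noncomputable def betaConst (α : ℝ) : ℝ :=
  ∫ r in (0:ℝ)..1, r ^ (-α) * (1 - r) ^ (α - 1)

lemma beta_intervalIntegrable {α : ℝ} (hα : 0 < α) (hα1 : α < 1) :
    IntervalIntegrable (fun r : ℝ => r ^ (-α) * (1 - r) ^ (α - 1)) volume 0 1 := by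
  have key : ∀ p q : ℝ, -1 < p →
      IntervalIntegrable (fun r : ℝ => r ^ p * (1 - r) ^ q) volume 0 (1/2) := by
    intro p q hp
    apply IntervalIntegrable.mul_continuousOn (intervalIntegral.intervalIntegrable_rpow' hp)
    intro x hx
    rw [Set.uIcc_of_le (by norm_num)] at hx
    apply ContinuousAt.continuousWithinAt
    apply ContinuousAt.rpow_const (by fun_prop)
    left
    linarith [hx.2]
  refine (key _ _ (by linarith)).trans ?_
  have h := ((key (α - 1) (-α) (by linarith)).comp_sub_left 1).symm
  norm_num at h
  convert h using 1
  · ext r; rw [mul_comm]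

lemma betaConst_pos {α : ℝ} (hα : 0 < α) (hα1 : α < 1) : 0 < betaConst α := by
  apply intervalIntegral.intervalIntegral_pos_of_pos_on (beta_intervalIntegrable hα hα1)
  · intro x hx
    have := hx.1
    have h2 : 0 < 1 - x := by linarith [hx.2]
    positivity
  · norm_num

lemma kernel_integral {α : ℝ} {τ t : ℝ} (h : τ < t) :
    ∫ s in τ..t, (t - s) ^ (α - 1) * (s - τ) ^ (-α) = betaConst α := by
  have h0 : 0 < t - τ := by linarith
  have := intervalIntegral.mul_integral_comp_mul_add (a := 0) (b := 1)
    (f := fun s => (t - s) ^ (α - 1) * (s - τ) ^ (-α)) (t - τ) τ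
  simp only [mul_zero, zero_add, mul_one, sub_add_cancel] at this
  rw [← this, betaConst, ← intervalIntegral.integral_const_mul]
  apply intervalIntegral.integral_congr
  intro r hr
  rw [Set.uIcc_of_le (by norm_num)] at hr
  have e1 : t - ((t - τ) * r + τ) = (t - τ) * (1 - r) := by ring
  have e2 : (t - τ) * r + τ - τ = (t - τ) * r := by ring
  simp only [e1, e2]
  rw [Real.mul_rpow h0.le (by linarith [hr.2]), Real.mul_rpow h0.le hr.1]
  have : (t - τ) * ((t - τ) ^ (α - 1) * (t - τ) ^ (-α)) = 1 := by
    rw [← Real.rpow_add h0]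
    have : α - 1 + -α = -1 := by ring
    rw [this, Real.rpow_neg_one]
    field_simp
  calc _ = ((t - τ) * ((t - τ) ^ (α - 1) * (t - τ) ^ (-α))) * (r ^ (-α) * (1 - r) ^ (α - 1)) := by
        ring
    _ = _ := by rw [this, one_mul]

/-- The kernel `(t - s)^(α-1) (s - τ)^(-α)` of the composition of the fractional integral of
order `α` with the one of order `1 - α`, cut off to `τ < s`. -/
noncomputable def fracKer (α t s τ : ℝ) : ℝ :=
  if τ < s then (t - s) ^ (α - 1) * (s - τ) ^ (-α) else 0

lemma fracKer_measurable (α t : ℝ) :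
    Measurable (fun z : ℝ × ℝ => fracKer α t z.1 z.2) := by
  unfold fracKer
  apply Measurable.ite (measurableSet_lt measurable_snd measurable_fst) _ measurable_const
  fun_prop

lemma fracKer_eq_indicator (α t τ : ℝ) :
    (fun s => fracKer α t s τ) =
      (Set.Ioi τ).indicator (fun s => (t - s) ^ (α - 1) * (s - τ) ^ (-α)) := by
  ext s
  simp [fracKer, Set.indicator]

lemma fracKer_integrable {α : ℝ} (hα : 0 < α) (hα1 : α < 1) {τ t : ℝ} (hτ0 : 0 < τ) (h : τ ≤ t) :
    Integrable (fun s => fracKer α t s τ) (volume.restrict (Set.Ioc 0 t)) := by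
  rw [fracKer_eq_indicator, integrable_indicator_iff measurableSet_Ioi, IntegrableOn,
    Measure.restrict_restrict measurableSet_Ioi]
  have : Set.Ioi τ ∩ Set.Ioc 0 t = Set.Ioc τ t := by
    ext s; simp only [Set.mem_inter_iff, Set.mem_Ioi, Set.mem_Ioc]
    constructor
    · rintro ⟨h1, h2, h3⟩; exact ⟨h1, h3⟩
    · rintro ⟨h1, h2⟩; exact ⟨h1, by linarith, h2⟩
  rw [this]
  rcases h.eq_or_lt with rfl | h
  · simp
  have := intervalIntegral.intervalIntegrable_of_integral_ne_zero
    (by rw [kernel_integral (α := α) h]; exact (betaConst_pos hα hα1).ne')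
  rwa [intervalIntegrable_iff_integrableOn_Ioc_of_le h.le] at this

lemma fracKer_integral {α : ℝ} {τ t : ℝ} (hτ0 : 0 < τ) (h : τ < t) :
    ∫ s in Set.Ioc 0 t, fracKer α t s τ = betaConst α := by
  rw [fracKer_eq_indicator, integral_indicator measurableSet_Ioi,
    Measure.restrict_restrict measurableSet_Ioi]
  have : Set.Ioi τ ∩ Set.Ioc 0 t = Set.Ioc τ t := by
    ext s; simp only [Set.mem_inter_iff, Set.mem_Ioi, Set.mem_Ioc]
    constructor
    · rintro ⟨h1, h2, h3⟩; exact ⟨h1, h3⟩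
    · rintro ⟨h1, h2⟩; exact ⟨h1, by linarith, h2⟩
  rw [this, ← intervalIntegral.integral_of_le h.le, kernel_integral h]

lemma fracKer_nonneg {α t s τ : ℝ} (h : s ≤ t) : 0 ≤ fracKer α t s τ := by
  unfold fracKer
  split_ifs with h1
  · have : 0 ≤ t - s := by linarith
    have : 0 ≤ s - τ := by linarith
    positivity
  · rfl

/-- Integrating the kernel in the variable `τ` gives the integral in the Caputo derivative. -/
lemma fracKer_integral_tau {α t s : ℝ} (hα : 0 < α) (hs : s ≤ t) (v : ℝ → ℝ) :
    ∫ τ in Set.Ioc 0 t, fracKer α t s τ * v τ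
      = (t - s) ^ (α - 1) * ∫ τ in Set.Ioc 0 s, (s - τ) ^ (-α) * v τ := by
  have e : (fun τ => fracKer α t s τ * v τ) =
      (Set.Iic s).indicator (fun τ => (t - s) ^ (α - 1) * ((s - τ) ^ (-α) * v τ)) := by
    ext τ
    rcases lt_trichotomy τ s with h | rfl | h
    · simp [fracKer, Set.indicator, h, h.le]; ring
    · have : (0:ℝ) ^ (-α) = 0 := Real.zero_rpow (by linarith)
      simp [fracKer, Set.indicator, this]
    · simp [fracKer, Set.indicator, not_lt.mpr h.le, not_le.mpr h]
  rw [e, integral_indicator measurableSet_Iic, Measure.restrict_restrict measurableSet_Iic,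
    integral_const_mul]
  congr 3
  ext x; simp only [Set.mem_inter_iff, Set.mem_Iic, Set.mem_Ioc]
  constructor
  · rintro ⟨h1, h2, h3⟩; exact ⟨h2, h1⟩
  · rintro ⟨h1, h2⟩; exact ⟨h2, h1, by linarith⟩

/-! ### The Alikhanov inequality -/

lemma rpow_sub_intervalIntegrable {q : ℝ} (hq : -1 < q) (s a b : ℝ) :
    IntervalIntegrable (fun τ : ℝ => (s - τ) ^ q) volume a b := by
  have := (intervalIntegral.intervalIntegrable_rpow' (a := s - a) (b := s - b) hq).comp_sub_left s
  simpa using this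

/-- Pointwise form of `2 v D^α v ≥ D^α (v²)`, written without the constant `1 / Γ(1 - α)`. -/
lemma alikhanov {α s : ℝ} (hα : 0 < α) (hα1 : α < 1) (hs : 0 < s) {v v' : ℝ → ℝ}
    (hv : ContinuousOn v (Set.Icc 0 s)) (hd : ∀ τ ∈ Set.Ioc 0 s, HasDerivAt v (v' τ) τ)
    (hc : ContinuousOn v' (Set.Ioc 0 s)) (hi : IntegrableOn v' (Set.Ioc 0 s)) :
    IntegrableOn (fun τ => (s - τ) ^ (-α) * v' τ) (Set.Ioc 0 s) ∧
    0 ≤ ∫ τ in Set.Ioc 0 s, (s - τ) ^ (-α) * v' τ * (v s - v τ) := by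
  have hI : IntegrableOn (fun τ => (s - τ) ^ (-α) * v' τ) (Set.Ioc 0 s) := by
    have h1 : IntervalIntegrable (fun τ => (s - τ) ^ (-α) * v' τ) volume 0 (s/2) := by
      apply IntervalIntegrable.continuousOn_mul
      · rw [intervalIntegrable_iff_integrableOn_Ioc_of_le (by linarith)]
        exact hi.mono_set (Set.Ioc_subset_Ioc_right (by linarith))
      · intro x hx
        rw [Set.uIcc_of_le (by linarith)] at hx
        apply ContinuousAt.continuousWithinAt
        apply ContinuousAt.rpow_const (by fun_prop)
        left
        linarith [hx.2]
    have h2 : IntervalIntegrable (fun τ => (s - τ) ^ (-α) * v' τ) volume (s/2) s := by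
      apply IntervalIntegrable.mul_continuousOn
      · exact rpow_sub_intervalIntegrable (by linarith) _ _ _
      · apply hc.mono
        rw [Set.uIcc_of_le (by linarith)]
        intro x hx
        exact ⟨by linarith [hx.1], hx.2⟩
    rw [← intervalIntegrable_iff_integrableOn_Ioc_of_le hs.le]
    exact h1.trans h2
  refine ⟨hI, ?_⟩
  set J : ℝ → ℝ := fun τ => (s - τ) ^ (-α) * v' τ * (v s - v τ) with hJ
  have hJi : IntervalIntegrable J volume 0 s := by
    apply IntervalIntegrable.mul_continuousOn
    · rwa [intervalIntegrable_iff_integrableOn_Ioc_of_le hs.le]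
    · rw [Set.uIcc_of_le hs.le]; fun_prop
  rw [← intervalIntegral.integral_of_le hs.le]
  set P : ℝ → ℝ := fun r => (∫ τ in (0:ℝ)..r, J τ) + (1/2) * (s - r) ^ (-α) * (v s - v r)^2 with hP
  have hprim : ContinuousOn (fun r => ∫ τ in (0:ℝ)..r, J τ) (Set.Icc 0 s) := by
    have := intervalIntegral.continuousOn_primitive_interval (f := J) (a := 0) (b := s) (μ := volume)
      (by rw [Set.uIcc_of_le hs.le]; rwa [integrableOn_Icc_iff_integrableOn_Ioc,
            ← intervalIntegrable_iff_integrableOn_Ioc_of_le hs.le])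
    rwa [Set.uIcc_of_le hs.le] at this
  have hPder : ∀ r ∈ Set.Ioo 0 s, HasDerivAt P ((1/2) * (α * (s - r) ^ (-α - 1)) * (v s - v r)^2) r := by
    intro r hr
    have hsr : 0 < s - r := by linarith [hr.2]
    have hJc : ContinuousOn J (Set.Ioo 0 s) := by
      apply ContinuousOn.mul
      · apply ContinuousOn.mul
        · intro x hx
          apply ContinuousAt.continuousWithinAt
          apply ContinuousAt.rpow_const (by fun_prop)
          left
          linarith [hx.2]
        · exact hc.mono Set.Ioo_subset_Ioc_self
      · exact continuousOn_const.sub (hv.mono Set.Ioo_subset_Icc_self)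
    have d1 : HasDerivAt (fun r => ∫ τ in (0:ℝ)..r, J τ) (J r) r := by
      apply intervalIntegral.integral_hasDerivAt_right
      · exact hJi.mono_set (by
          rw [Set.uIcc_of_le hs.le, Set.uIcc_of_le hr.1.le]
          exact Set.Icc_subset_Icc_right hr.2.le)
      · exact hJc.stronglyMeasurableAtFilter isOpen_Ioo r hr
      · exact hJc.continuousAt (isOpen_Ioo.mem_nhds hr)
    have d2 : HasDerivAt (fun r => (s - r) ^ (-α)) (α * (s - r) ^ (-α - 1)) r := by
      have := ((hasDerivAt_id r).const_sub s).rpow_const (p := -α) (Or.inl hsr.ne')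
      simpa using this
    have d3 := (((hd r ⟨hr.1, hr.2.le⟩).const_sub (v s)).pow 2)
    have := d1.add ((d2.const_mul (1/2)).mul d3)
    refine HasDerivAt.congr_deriv (f := P) this ?_
    change (s - r) ^ (-α) * v' r * (v s - v r) +
      (1 / 2 * (α * (s - r) ^ (-α - 1)) * (v s - v r) ^ 2 +
        1 / 2 * (s - r) ^ (-α) * (((2:ℕ):ℝ) * (v s - v r) ^ (2 - 1) * -v' r)) = _
    push_cast
    ring
  have hmono : MonotoneOn P (Set.Ico 0 s) := by
    apply monotoneOn_of_deriv_nonneg (convex_Ico 0 s)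
    · apply ContinuousOn.add (hprim.mono Set.Ico_subset_Icc_self)
      apply ContinuousOn.mul
      · apply ContinuousOn.mul continuousOn_const
        intro x hx
        apply ContinuousAt.continuousWithinAt
        apply ContinuousAt.rpow_const (by fun_prop)
        left
        linarith [hx.2]
      · exact (continuousOn_const.sub (hv.mono Set.Ico_subset_Icc_self)).pow 2
    · rw [interior_Ico]
      intro r hr
      exact (hPder r hr).differentiableAt.differentiableWithinAt
    · rw [interior_Ico]
      intro r hr
      rw [(hPder r hr).deriv]
      have hsr : 0 < s - r := by linarith [hr.2]
      positivity
  have hP0 : 0 ≤ P 0 := by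
    simp only [hP, intervalIntegral.integral_same, sub_zero, zero_add]
    positivity
  have hPr : ∀ r ∈ Set.Ico 0 s, 0 ≤ P r := fun r hr =>
    hP0.trans (hmono ⟨le_rfl, hs⟩ hr hr.1)
  -- the boundary term vanishes as `r → s`, because `v r - v s = O(s - r)`
  have hlim1 : Filter.Tendsto (fun r => ∫ τ in (0:ℝ)..r, J τ) (nhdsWithin s (Set.Iio s))
      (nhds (∫ τ in (0:ℝ)..s, J τ)) := by
    have h := hprim s ⟨hs.le, le_rfl⟩
    apply h.mono_left
    rw [← nhdsWithin_Ioo_eq_nhdsLT hs]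
    exact nhdsWithin_mono _ Set.Ioo_subset_Icc_self
  have hlim2 : Filter.Tendsto (fun r => (1/2) * (s - r) ^ (-α) * (v s - v r)^2)
      (nhdsWithin s (Set.Iio s)) (nhds 0) := by
    have hO := (hd s ⟨hs, le_rfl⟩).isBigO_sub
    obtain ⟨C, hC⟩ := hO.bound
    have hC' : ∀ᶠ r in nhdsWithin s (Set.Iio s), ‖(1/2) * (s - r) ^ (-α) * (v s - v r)^2‖ ≤
        (1/2) * C^2 * (s - r) ^ (2 - α) := by
      filter_upwards [nhdsWithin_le_nhds hC, self_mem_nhdsWithin] with r h1 h2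
      have h2 : 0 < s - r := by simpa using h2
      rw [Real.norm_eq_abs, abs_of_nonneg (by positivity)]
      rw [Real.norm_eq_abs, Real.norm_eq_abs] at h1
      have h3 : (v s - v r)^2 ≤ C^2 * (s-r)^2 := by
        rw [← mul_pow, ← sq_abs, abs_sub_comm]
        rw [abs_sub_comm r s, abs_of_pos h2] at h1
        exact pow_le_pow_left₀ (abs_nonneg _) h1 2
      have e : (s - r) ^ (2 - α) = (s - r) ^ (-α) * (s-r)^2 := by
        rw [← Real.rpow_natCast, ← Real.rpow_add h2]; congr 1; push_cast; ring
      rw [e]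
      calc _ ≤ 1/2 * (s - r) ^ (-α) * (C^2 * (s-r)^2) := by gcongr
        _ = _ := by ring
    apply squeeze_zero_norm' hC'
    have : Filter.Tendsto (fun r => (1/2) * C^2 * (s - r) ^ (2 - α)) (nhds s)
        (nhds ((1/2) * C^2 * (s - s) ^ (2 - α))) := by
      apply Filter.Tendsto.const_mul
      apply ContinuousAt.tendsto (f := fun r => (s - r) ^ (2 - α))
      apply ContinuousAt.rpow_const (by fun_prop)
      right; linarith
    rw [sub_self, Real.zero_rpow (by linarith), mul_zero] at this
    exact this.mono_left nhdsWithin_le_nhds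
  have hlim := hlim1.add hlim2
  rw [add_zero] at hlim
  apply ge_of_tendsto hlim
  filter_upwards [Ioo_mem_nhdsLT hs] with r hr
  exact hPr r ⟨hr.1.le, hr.2⟩

/-! ### A fractional Gronwall inequality -/

lemma expKer_bound {α lam t : ℝ} (hα : 0 < α) (hlam : 0 < lam) (ht : 0 < t) :
    IntegrableOn (fun s => (t - s) ^ (α - 1) * exp (lam * s)) (Set.Ioc 0 t) ∧
    ∫ s in Set.Ioc 0 t, (t - s) ^ (α - 1) * exp (lam * s)
      ≤ exp (lam * t) * ((1 / lam) ^ α * Gamma α) := by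
  constructor
  · rw [← intervalIntegrable_iff_integrableOn_Ioc_of_le ht.le]
    apply IntervalIntegrable.mul_continuousOn
    · exact rpow_sub_intervalIntegrable (by linarith) _ _ _
    · fun_prop
  · rw [← intervalIntegral.integral_of_le ht.le]
    have h1 := intervalIntegral.integral_comp_sub_left (a := 0) (b := t)
      (fun r => exp (lam * t) * (r ^ (α - 1) * exp (-(lam * r)))) t
    have e : ∀ s, exp (lam * t) * ((t - s) ^ (α - 1) * exp (-(lam * (t - s)))) =
        (t - s) ^ (α - 1) * exp (lam * s) := by
      intro s
      rw [mul_left_comm, ← exp_add]; congr 2; ring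
    simp only [e] at h1
    rw [h1, sub_self, sub_zero, intervalIntegral.integral_const_mul,
      intervalIntegral.integral_of_le ht.le]
    apply mul_le_mul_of_nonneg_left _ (exp_pos _).le
    rw [← Real.integral_rpow_mul_exp_neg_mul_Ioi hα hlam]
    apply setIntegral_mono_set
    · apply MeasureTheory.Integrable.of_integral_ne_zero
      rw [Real.integral_rpow_mul_exp_neg_mul_Ioi hα hlam]
      have := Real.Gamma_pos_of_pos hα
      positivity
    · filter_upwards [ae_restrict_mem measurableSet_Ioi] with x hx
      have : 0 < x := hx
      simp only [Pi.zero_apply]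
      positivity
    · exact Set.Ioc_subset_Ioi_self.eventuallyLE

lemma fractional_gronwall {α T B C : ℝ} (hα : 0 < α) (hC : 0 < C) {N : ℝ → ℝ}
    (hN0 : ∀ t, 0 ≤ N t) (hNB : ∀ t ∈ Set.Ioc 0 T, N t ≤ B)
    (h : ∀ t ∈ Set.Ioc 0 T, N t ≤ C * ∫ s in Set.Ioc 0 t, (t - s) ^ (α - 1) * N s) :
    ∀ t ∈ Set.Ioc 0 T, N t = 0 := by
  have hG := Real.Gamma_pos_of_pos hα
  -- `lam` is chosen so that `C Γ(α) lam^(-α) = 1/2`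
  obtain ⟨lam, hlam, hlam2⟩ : ∃ lam : ℝ, 0 < lam ∧ C * ((1 / lam) ^ α * Gamma α) = 1/2 := by
    refine ⟨(2 * C * Gamma α) ^ (1/α), by positivity, ?_⟩
    rw [one_div ((2 * C * Gamma α) ^ (1/α)), Real.inv_rpow (by positivity),
      ← Real.rpow_mul (by positivity), one_div_mul_cancel hα.ne', Real.rpow_one]
    field_simp
  have step : ∀ k : ℕ, ∀ t ∈ Set.Ioc 0 T, N t ≤ |B| * (1/2)^k * exp (lam * t) := by
    intro k
    induction k with
    | zero =>
      intro t ht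
      have : 1 ≤ exp (lam * t) := Real.one_le_exp (mul_nonneg hlam.le ht.1.le)
      calc N t ≤ B := hNB t ht
        _ ≤ |B| := le_abs_self B
        _ = |B| * (1/2)^0 * 1 := by ring
        _ ≤ _ := by gcongr
    | succ k ih =>
      intro t ht
      obtain ⟨hi, hb⟩ := expKer_bound hα hlam ht.1
      have h1 : ∫ s in Set.Ioc 0 t, (t - s) ^ (α - 1) * N s ≤
          ∫ s in Set.Ioc 0 t, (|B| * (1/2)^k) * ((t - s) ^ (α - 1) * exp (lam * s)) := by
        apply integral_mono_of_nonneg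
        · filter_upwards [ae_restrict_mem measurableSet_Ioc] with s hs
          have : 0 ≤ t - s := by linarith [hs.2]
          have := hN0 s
          simp only [Pi.zero_apply]
          positivity
        · exact hi.const_mul _
        · filter_upwards [ae_restrict_mem measurableSet_Ioc] with s hs
          have h0 : 0 ≤ t - s := by linarith [hs.2]
          have := ih s ⟨hs.1, hs.2.trans ht.2⟩
          calc _ ≤ (t - s) ^ (α - 1) * (|B| * (1/2)^k * exp (lam * s)) := by gcongr
            _ = _ := by ring
      rw [integral_const_mul] at h1
      calc N t ≤ C * ∫ s in Set.Ioc 0 t, (t - s) ^ (α - 1) * N s := h t ht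
        _ ≤ C * ((|B| * (1/2)^k) * (exp (lam * t) * ((1 / lam) ^ α * Gamma α))) := by
            gcongr
            exact h1.trans (by gcongr)
        _ = (|B| * (1/2)^k) * exp (lam * t) * (C * ((1 / lam) ^ α * Gamma α)) := by ring
        _ = _ := by rw [hlam2]; ring
  intro t ht
  apply le_antisymm _ (hN0 t)
  have hl : Filter.Tendsto (fun k : ℕ => |B| * (1/2:ℝ)^k * exp (lam * t)) Filter.atTop
      (nhds (|B| * 0 * exp (lam * t))) := by
    apply Filter.Tendsto.mul_const
    apply Filter.Tendsto.const_mul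
    exact tendsto_pow_atTop_nhds_zero_of_lt_one (by norm_num) (by norm_num)
  rw [mul_zero, zero_mul] at hl
  exact ge_of_tendsto' hl (fun k => step k t ht)

/-! ### From the energy inequality to uniqueness -/

/-- The fractional integral of the energy inequality: `N(t) ≤ C' I^α N (t)` for
`N(t) = ∫ w(t)²`. The whole argument takes place on the triple product of
`τ`, `p` and `s`, where `K(s,τ) w_t(τ,p)` is integrable. -/
lemma energy_volterra {E : Type*} [MeasurableSpace E] {μ : Measure E} [IsFiniteMeasure μ]
    {α t B C : ℝ} (hα : 0 < α) (hα1 : α < 1) (ht : 0 < t)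
    {w wt : ℝ → E → ℝ}
    (hwt : Integrable (fun q : ℝ × E => wt q.1 q.2) ((volume.restrict (Set.Ioc 0 t)).prod μ))
    (hwm : AEStronglyMeasurable (fun q : ℝ × E => w q.1 q.2)
      ((volume.restrict (Set.Ioc 0 t)).prod μ))
    (hwB : ∀ s ∈ Set.Ioc 0 t, ∀ p, |w s p| ≤ B)
    (hw0 : ∀ᵐ p ∂μ, w 0 p = 0)
    (hwc : ∀ᵐ p ∂μ, ContinuousOn (fun s => w s p) (Set.Icc 0 t))
    (hwd : ∀ᵐ p ∂μ, ∀ s ∈ Set.Ioc 0 t, HasDerivAt (fun s => w s p) (wt s p) s)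
    (hwtc : ∀ᵐ p ∂μ, ContinuousOn (fun s => wt s p) (Set.Ioc 0 t))
    (hE : ∀ s ∈ Set.Ioc 0 t,
      Integrable (fun p => w s p * ∫ τ in Set.Ioc 0 s, (s - τ) ^ (-α) * wt τ p) μ →
      ∫ p, w s p * (∫ τ in Set.Ioc 0 s, (s - τ) ^ (-α) * wt τ p) ∂μ ≤ C * ∫ p, (w s p)^2 ∂μ) :
    ∫ p, (w t p)^2 ∂μ ≤
      (2 * C / betaConst α) * ∫ s in Set.Ioc 0 t, (t - s) ^ (α - 1) * ∫ p, (w s p)^2 ∂μ := by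
  set ν := volume.restrict (Set.Ioc 0 t) with hν
  have hβ := betaConst_pos hα hα1
  have hmemν : ∀ᵐ s ∂ν, s ∈ Set.Ioc 0 t := ae_restrict_mem measurableSet_Ioc
  have hneν : ∀ᵐ s ∂ν, s ∈ Set.Ioo 0 t := by
    have h1 : ∀ᵐ s ∂ν, s ≠ t := by
      apply ae_restrict_of_ae
      simp [ae_iff]
    filter_upwards [hmemν, h1] with s hs h1
    exact ⟨hs.1, lt_of_le_of_ne hs.2 h1⟩
  have hmem1 : ∀ᵐ z ∂(ν.prod μ), z.1 ∈ Set.Ioo 0 t :=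
    Measure.quasiMeasurePreserving_fst.ae hneν
  have hmem2 : ∀ᵐ z ∂((ν.prod μ).prod ν), z.2 ∈ Set.Ioo 0 t :=
    Measure.quasiMeasurePreserving_snd.ae hneν
  have hmem3 : ∀ᵐ z ∂((ν.prod μ).prod ν), z.1.1 ∈ Set.Ioo 0 t :=
    Measure.quasiMeasurePreserving_fst.ae hmem1
  -- integrability on the triple product
  have hF : Integrable (fun z : (ℝ × E) × ℝ => fracKer α t z.2 z.1.1 * wt z.1.1 z.1.2)
      ((ν.prod μ).prod ν) := by
    have hmeas : AEStronglyMeasurable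
        (fun z : (ℝ × E) × ℝ => fracKer α t z.2 z.1.1 * wt z.1.1 z.1.2) ((ν.prod μ).prod ν) := by
      apply AEStronglyMeasurable.mul
      · apply Measurable.aestronglyMeasurable
        exact (fracKer_measurable α t).comp (by fun_prop : Measurable
          (fun z : (ℝ × E) × ℝ => (z.2, z.1.1)))
      · exact hwt.aestronglyMeasurable.comp_fst
    rw [integrable_prod_iff hmeas]
    constructor
    · filter_upwards [hmem1] with z hz
      exact (fracKer_integrable hα hα1 hz.1 hz.2.le).mul_const _
    · apply (hwt.norm.const_mul (betaConst α)).congr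
      filter_upwards [hmem1] with z hz
      rw [← fracKer_integral hz.1 hz.2, ← integral_mul_const]
      apply integral_congr_ae
      filter_upwards [hmemν] with s hs
      simp only [norm_mul]
      rw [Real.norm_of_nonneg (fracKer_nonneg hs.2)]
  have hΦ : Integrable (fun z : (ℝ × E) × ℝ =>
      fracKer α t z.2 z.1.1 * wt z.1.1 z.1.2 * w z.2 z.1.2) ((ν.prod μ).prod ν) := by
    apply hF.mul_bdd (c := B)
    · have hq : Measure.QuasiMeasurePreserving (fun z : (ℝ × E) × ℝ => (z.2, z.1.2))
          ((ν.prod μ).prod ν) (ν.prod μ) := by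
        have h1 : Measure.QuasiMeasurePreserving (Prod.map (Prod.snd : ℝ × E → E) (id : ℝ → ℝ))
            ((ν.prod μ).prod ν) (μ.prod ν) :=
          MeasureTheory.QuasiMeasurePreserving.prodMap Measure.quasiMeasurePreserving_snd (Measure.QuasiMeasurePreserving.id ν)
        exact Measure.measurePreserving_swap.quasiMeasurePreserving.comp h1
      exact hwm.comp_quasiMeasurePreserving hq
    · filter_upwards [hmem2] with z hz
      exact hwB _ ⟨hz.1, hz.2.le⟩ _
  have hΨ : Integrable (fun z : (ℝ × E) × ℝ =>
      fracKer α t z.2 z.1.1 * wt z.1.1 z.1.2 * w z.1.1 z.1.2) ((ν.prod μ).prod ν) := by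
    apply hF.mul_bdd (c := B)
    · exact hwm.comp_fst
    · filter_upwards [hmem3] with z hz
      exact hwB _ ⟨hz.1, hz.2.le⟩ _
  have hwtp : ∀ᵐ p ∂μ, Integrable (fun τ => wt τ p) ν := hwt.prod_left_ae
  -- the pointwise inequality of Alikhanov, integrated
  have hΘ : 0 ≤ ∫ z : (ℝ × E) × ℝ, (fracKer α t z.2 z.1.1 * wt z.1.1 z.1.2 * w z.2 z.1.2 -
      fracKer α t z.2 z.1.1 * wt z.1.1 z.1.2 * w z.1.1 z.1.2) ∂((ν.prod μ).prod ν) := by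
    have hΦΨ : Integrable (fun z : (ℝ × E) × ℝ =>
        fracKer α t z.2 z.1.1 * wt z.1.1 z.1.2 * w z.2 z.1.2 -
        fracKer α t z.2 z.1.1 * wt z.1.1 z.1.2 * w z.1.1 z.1.2) ((ν.prod μ).prod ν) := hΦ.sub hΨ
    rw [integral_prod_symm _ hΦΨ]
    apply integral_nonneg_of_ae
    filter_upwards [hmemν, hΦΨ.prod_left_ae] with s hs hsi
    simp only [Pi.zero_apply]
    rw [integral_prod_symm _ hsi]
    apply integral_nonneg_of_ae
    filter_upwards [hwc, hwd, hwtc, hwtp] with p h1 h2 h3 h4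
    simp only [Pi.zero_apply]
    have hA := (alikhanov hα hα1 hs.1 (h1.mono (Set.Icc_subset_Icc_right hs.2))
      (fun τ hτ => h2 τ ⟨hτ.1, hτ.2.trans hs.2⟩) (h3.mono (Set.Ioc_subset_Ioc_right hs.2))
      (IntegrableOn.mono_set (show IntegrableOn (fun τ => wt τ p) (Set.Ioc 0 t) volume from h4)
        (Set.Ioc_subset_Ioc_right hs.2))).2
    have e : ∀ τ, fracKer α t s τ * wt τ p * w s p - fracKer α t s τ * wt τ p * w τ p =
        fracKer α t s τ * (wt τ p * (w s p - w τ p)) := fun τ => by ring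
    simp only [e]
    rw [hν, fracKer_integral_tau hα hs.2 (fun τ => wt τ p * (w s p - w τ p))]
    apply mul_nonneg
    · exact Real.rpow_nonneg (by linarith [hs.2]) _
    · simpa only [mul_assoc] using hA
  rw [integral_sub hΦ hΨ] at hΘ
  -- the integral of the lower bound is an energy at time `t`
  have hΨv : ∫ z : (ℝ × E) × ℝ, fracKer α t z.2 z.1.1 * wt z.1.1 z.1.2 * w z.1.1 z.1.2
      ∂((ν.prod μ).prod ν) = betaConst α / 2 * ∫ p, (w t p)^2 ∂μ := by
    have hww : Integrable (fun z : ℝ × E => wt z.1 z.2 * w z.1 z.2) (ν.prod μ) := by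
      apply hwt.mul_bdd (c := B) hwm
      filter_upwards [hmem1] with z hz
      exact hwB _ ⟨hz.1, hz.2.le⟩ _
    rw [integral_prod _ hΨ]
    have e1 : ∫ z : ℝ × E, (∫ s, fracKer α t s z.1 * wt z.1 z.2 * w z.1 z.2 ∂ν) ∂(ν.prod μ) =
        ∫ z : ℝ × E, betaConst α * (wt z.1 z.2 * w z.1 z.2) ∂(ν.prod μ) := by
      apply integral_congr_ae
      filter_upwards [hmem1] with z hz
      simp only [mul_assoc]
      rw [integral_mul_const, fracKer_integral hz.1 hz.2]
    rw [e1, integral_const_mul, integral_prod_symm _ hww, div_mul_eq_mul_div, mul_div_assoc,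
      ← integral_div]
    congr 1
    apply integral_congr_ae
    filter_upwards [hwc, hwd, hwtp, hw0, hww.prod_left_ae] with p h1 h2 h3 h4 h5
    have := intervalIntegral.integral_eq_sub_of_hasDerivAt_of_le (f := fun s => (w s p)^2 / 2)
      (f' := fun s => wt s p * w s p) ht.le ((h1.pow 2).div_const 2)
      (fun s hs => by
        refine (((h2 s ⟨hs.1, hs.2.le⟩).pow 2).div_const 2).congr_deriv ?_
        push_cast; ring)
      (by rw [intervalIntegrable_iff_integrableOn_Ioc_of_le ht.le]; exact h5)
    rw [intervalIntegral.integral_of_le ht.le] at this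
    simp only [h4] at this
    rw [this]; ring
  -- the energy inequality bounds the integral of `w D^α w`
  have hrpow : Integrable (fun s => (t - s) ^ (α - 1)) ν := by
    have := rpow_sub_intervalIntegrable (q := α - 1) (by linarith) t 0 t
    rwa [intervalIntegrable_iff_integrableOn_Ioc_of_le ht.le] at this
  have hRHS : Integrable (fun s => (t - s) ^ (α - 1) * ∫ p, (w s p)^2 ∂μ) ν := by
    have h1 : Integrable (fun z : ℝ × E => ((t - z.1) ^ (α - 1) * 1) * (w z.1 z.2)^2) (ν.prod μ) := by
      apply (hrpow.mul_prod (integrable_const (1:ℝ))).mul_bdd (c := B^2)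
      · exact hwm.pow 2
      · filter_upwards [hmem1] with z hz
        rw [norm_pow]
        exact pow_le_pow_left₀ (norm_nonneg _) (hwB _ ⟨hz.1, hz.2.le⟩ _) 2
    refine h1.integral_prod_left.congr (Filter.Eventually.of_forall fun s => ?_)
    simp only [mul_one]
    rw [integral_const_mul]
  have hΦv : ∫ z : (ℝ × E) × ℝ, fracKer α t z.2 z.1.1 * wt z.1.1 z.1.2 * w z.2 z.1.2
      ∂((ν.prod μ).prod ν) ≤ C * ∫ s, (t - s) ^ (α - 1) * ∫ p, (w s p)^2 ∂μ ∂ν := by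
    rw [integral_prod_symm _ hΦ, ← integral_const_mul]
    apply integral_mono_ae hΦ.integral_prod_right (hRHS.const_mul C)
    filter_upwards [hneν, hΦ.prod_left_ae] with s hs hsi
    have hpos : 0 < (t - s) ^ (α - 1) := Real.rpow_pos_of_pos (by linarith [hs.2]) _
    rw [integral_prod_symm _ hsi]
    have e : ∀ p, ∫ τ, fracKer α t s τ * wt τ p * w s p ∂ν = (t - s) ^ (α - 1) *
        (w s p * ∫ τ in Set.Ioc 0 s, (s - τ) ^ (-α) * wt τ p) := by
      intro p
      rw [integral_mul_const, hν, fracKer_integral_tau hα hs.2.le (fun τ => wt τ p)]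
      ring
    have hpi := hsi.integral_prod_right
    simp only [e] at hpi ⊢
    rw [integral_const_mul]
    have hpi' := hpi.const_mul ((t - s) ^ (α - 1))⁻¹
    simp only [inv_mul_cancel_left₀ hpos.ne'] at hpi'
    calc _ ≤ (t - s) ^ (α - 1) * (C * ∫ p, (w s p)^2 ∂μ) :=
          mul_le_mul_of_nonneg_left (hE s ⟨hs.1, hs.2.le⟩ hpi') hpos.le
      _ = _ := by ring
  rw [hΨv] at hΘ
  rw [div_mul_eq_mul_div, le_div_iff₀ hβ]
  linarith

lemma energy_zero {E : Type*} [MeasurableSpace E] {μ : Measure E} [IsFiniteMeasure μ]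
    {α T B C : ℝ} (hα : 0 < α) (hα1 : α < 1) (hC : 0 < C)
    {w wt : ℝ → E → ℝ}
    (hwt : Integrable (fun q : ℝ × E => wt q.1 q.2) ((volume.restrict (Set.Ioc 0 T)).prod μ))
    (hwm : AEStronglyMeasurable (fun q : ℝ × E => w q.1 q.2)
      ((volume.restrict (Set.Ioc 0 T)).prod μ))
    (hwB : ∀ s ∈ Set.Ioc 0 T, ∀ p, |w s p| ≤ B)
    (hw0 : ∀ᵐ p ∂μ, w 0 p = 0)
    (hwc : ∀ᵐ p ∂μ, ContinuousOn (fun s => w s p) (Set.Icc 0 T))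
    (hwd : ∀ᵐ p ∂μ, ∀ s ∈ Set.Ioc 0 T, HasDerivAt (fun s => w s p) (wt s p) s)
    (hwtc : ∀ᵐ p ∂μ, ContinuousOn (fun s => wt s p) (Set.Ioc 0 T))
    (hE : ∀ s ∈ Set.Ioc 0 T,
      Integrable (fun p => w s p * ∫ τ in Set.Ioc 0 s, (s - τ) ^ (-α) * wt τ p) μ →
      ∫ p, w s p * (∫ τ in Set.Ioc 0 s, (s - τ) ^ (-α) * wt τ p) ∂μ ≤ C * ∫ p, (w s p)^2 ∂μ) :
    ∀ t ∈ Set.Ioc 0 T, ∫ p, (w t p)^2 ∂μ = 0 := by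
  have hβ := betaConst_pos hα hα1
  apply fractional_gronwall (B := B^2 * μ.real Set.univ) (C := 2 * C / betaConst α) hα
    (by positivity)
  · intro t; exact integral_nonneg (fun p => sq_nonneg _)
  · intro t ht
    have h := norm_integral_le_of_norm_le_const (μ := μ) (f := fun p => (w t p)^2) (C := B^2)
      (Filter.Eventually.of_forall fun p => by
        rw [norm_pow]; exact pow_le_pow_left₀ (norm_nonneg _) (hwB t ht p) 2)
    exact (le_abs_self _).trans h
  · intro t ht
    have hsub : Set.Ioc 0 t ⊆ Set.Ioc 0 T := Set.Ioc_subset_Ioc_right ht.2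
    have hle : (volume.restrict (Set.Ioc 0 t)).prod μ ≤ (volume.restrict (Set.Ioc 0 T)).prod μ :=
      Measure.prod_mono (Measure.restrict_mono hsub le_rfl) le_rfl
    apply energy_volterra (B := B) hα hα1 ht.1 (hwt.mono_measure hle) (hwm.mono_measure hle)
      (fun s hs => hwB s (hsub hs)) hw0
    · filter_upwards [hwc] with p h using h.mono (Set.Icc_subset_Icc_right ht.2)
    · filter_upwards [hwd] with p h s hs using h s (hsub hs)
    · filter_upwards [hwtc] with p h using h.mono hsub
    · exact fun s hs => hE s (hsub hs)

/-! ### The energy estimate in the space variables -/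

/-- The second directional derivative of `U` at `p` in the direction `v`. -/
noncomputable def dirDeriv2 {E : Type*} [NormedAddCommGroup E] [NormedSpace ℝ E]
    (U : E → ℝ) (v p : E) : ℝ :=
  fderiv ℝ (fun q => fderiv ℝ U q v) p v

lemma contDiff_of_support {E : Type*} [NormedAddCommGroup E] [NormedSpace ℝ E]
    {U : E → ℝ} {D S K : Set E} (hD : IsOpen D) (hDS : D ⊆ S) (hK : IsCompact K) (hKD : K ⊆ D)
    (hU : ContDiffOn ℝ 2 U S) (h0 : ∀ p ∉ K, U p = 0) :
    ContDiff ℝ 2 U ∧ HasCompactSupport U := by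
  refine ⟨?_, HasCompactSupport.intro hK h0⟩
  rw [contDiff_iff_contDiffAt]
  intro p
  by_cases hp : p ∈ D
  · exact (hU.mono hDS).contDiffAt (hD.mem_nhds hp)
  · have hp' : p ∈ Kᶜ := fun h => hp (hKD h)
    have : U =ᶠ[nhds p] fun _ => 0 := by
      filter_upwards [hK.isClosed.isOpen_compl.mem_nhds hp'] with q hq using h0 q hq
    exact contDiffAt_const.congr_of_eventuallyEq this

section slices

variable {E : Type*} [NormedAddCommGroup E] [NormedSpace ℝ E]

lemma contDiff_dirDeriv {U : E → ℝ} (hU : ContDiff ℝ 2 U) (v : E) :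
    ContDiff ℝ 1 (fun q => fderiv ℝ U q v) :=
  (hU.fderiv_right (m := 1) (by norm_num)).clm_apply contDiff_const

lemma deriv_slice {U : E → ℝ} (hU : ContDiff ℝ 2 U) {γ : ℝ → E} {v : E}
    (hγ : ∀ s, HasDerivAt γ v s) (s : ℝ) :
    deriv (fun s => U (γ s)) s = fderiv ℝ U (γ s) v :=
  (((hU.differentiable (by norm_num)) (γ s)).hasFDerivAt.comp_hasDerivAt s (hγ s)).deriv

lemma iteratedDeriv_two_slice {U : E → ℝ} (hU : ContDiff ℝ 2 U) {γ : ℝ → E} {v : E}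
    (hγ : ∀ s, HasDerivAt γ v s) (s : ℝ) :
    iteratedDeriv 2 (fun s => U (γ s)) s = dirDeriv2 U v (γ s) := by
  rw [iteratedDeriv_succ, iteratedDeriv_one]
  have : deriv (fun s => U (γ s)) = fun s => fderiv ℝ U (γ s) v := by
    ext s; exact deriv_slice hU hγ s
  rw [this]
  exact ((((contDiff_dirDeriv hU v).differentiable (by norm_num)) (γ s)).hasFDerivAt.comp_hasDerivAt
    s (hγ s)).deriv

lemma fderiv_sub_apply' {U V : E → ℝ} (hU : ContDiff ℝ 2 U) (hV : ContDiff ℝ 2 V) (v p : E) :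
    fderiv ℝ (fun q => U q - V q) p v = fderiv ℝ U p v - fderiv ℝ V p v := by
  rw [fderiv_fun_sub (hU.differentiable (by norm_num) p) (hV.differentiable (by norm_num) p)]
  rfl

lemma dirDeriv2_sub {U V : E → ℝ} (hU : ContDiff ℝ 2 U) (hV : ContDiff ℝ 2 V) (v p : E) :
    dirDeriv2 (fun q => U q - V q) v p = dirDeriv2 U v p - dirDeriv2 V v p := by
  unfold dirDeriv2
  have : (fun q => fderiv ℝ (fun q => U q - V q) q v) =
      fun q => fderiv ℝ U q v - fderiv ℝ V q v := by
    ext q; exact fderiv_sub_apply' hU hV v q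
  rw [this, fderiv_fun_sub ((contDiff_dirDeriv hU v).differentiable (by norm_num) p)
    ((contDiff_dirDeriv hV v).differentiable (by norm_num) p)]
  rfl

lemma continuous_dirDeriv2 {U : E → ℝ} (hU : ContDiff ℝ 2 U) (v : E) :
    Continuous (dirDeriv2 U v) :=
  ((contDiff_dirDeriv hU v).continuous_fderiv (by norm_num)).clm_apply continuous_const

end slices

lemma integrable_mul_of_compactSupport {E : Type*} [TopologicalSpace E] [MeasurableSpace E]
    [OpensMeasurableSpace E] {μ : Measure E} [IsFiniteMeasureOnCompacts μ]
    {W F : E → ℝ} (hW : Continuous W)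
    (hF : Continuous F) (hs : HasCompactSupport W) : Integrable (fun p => W p * F p) μ :=
  (hW.mul hF).integrable_of_hasCompactSupport hs.mul_right

lemma integral_mul_dirDeriv2 {E : Type*} [NormedAddCommGroup E] [NormedSpace ℝ E]
    [MeasurableSpace E] [BorelSpace E] [FiniteDimensional ℝ E] {μ : Measure E} [μ.IsAddHaarMeasure]
    {W : E → ℝ} (hW : ContDiff ℝ 2 W) (hs : HasCompactSupport W) (v : E) :
    ∫ p, W p * dirDeriv2 W v p ∂μ = - ∫ p, (fderiv ℝ W p v)^2 ∂μ := by
  have hc := hW.continuous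
  have hd := (contDiff_dirDeriv hW v)
  have hds : HasCompactSupport (fun q => fderiv ℝ W q v) := hs.fderiv_apply ℝ v
  have := integral_mul_fderiv_eq_neg_fderiv_mul_of_integrable (μ := μ) (f := W)
    (g := fun q => fderiv ℝ W q v) (v := v)
    (integrable_mul_of_compactSupport hd.continuous hd.continuous hds)
    (integrable_mul_of_compactSupport hc (continuous_dirDeriv2 hW v) hs)
    (integrable_mul_of_compactSupport hc hd.continuous hs)
    (fun x _ => hW.differentiable (by norm_num) x)
    (fun x _ => hd.differentiable (by norm_num) x)
  simp only [dirDeriv2, sq]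
  exact this

/-- The unit vector of the `j`-th coordinate of `x`. -/
noncomputable abbrev dirX {n : ℕ} (j : Fin n) : (Fin n → ℝ) × ℝ := (Pi.single j 1, 0)

/-- The unit vector of the coordinate `y`. -/
noncomputable abbrev dirY {n : ℕ} : (Fin n → ℝ) × ℝ := (0, 1)

lemma hasDerivAt_lineX {n : ℕ} (x : Fin n → ℝ) (y : ℝ) (j : Fin n) (s : ℝ) :
    HasDerivAt (fun s => (Function.update x j s, y)) (dirX j) s :=
  (hasDerivAt_update x j s).prodMk (hasDerivAt_const s y)

lemma hasDerivAt_lineY {n : ℕ} (x : Fin n → ℝ) (s : ℝ) :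
    HasDerivAt (fun s => (x, s)) (dirY (n := n)) s :=
  (hasDerivAt_const s x).prodMk (hasDerivAt_id s)

/-- Averaging in `y` over `(0, π)` multiplies the integral over `G × (0, π)` by `π`. -/
lemma integral_fibre {n : ℕ} {G : Set (Fin n → ℝ)} {q : (Fin n → ℝ) × ℝ → ℝ}
    (hq : IntegrableOn q (G ×ˢ Set.Ioo 0 π)) :
    IntegrableOn (fun p : (Fin n → ℝ) × ℝ => ∫ z in Set.Ioo 0 π, q (p.1, z)) (G ×ˢ Set.Ioo 0 π) ∧
    ∫ p in G ×ˢ Set.Ioo 0 π, (∫ z in Set.Ioo 0 π, q (p.1, z)) = π * ∫ p in G ×ˢ Set.Ioo 0 π, q p := by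
  unfold IntegrableOn at *
  rw [Measure.volume_eq_prod, ← Measure.prod_restrict] at *
  have h1 := hq.integral_prod_left
  have h2 : Integrable (fun p : (Fin n → ℝ) × ℝ => (∫ z in Set.Ioo 0 π, q (p.1, z)) * 1)
      ((volume.restrict G).prod (volume.restrict (Set.Ioo 0 π))) :=
    h1.mul_prod (integrable_const (1:ℝ))
  simp only [mul_one] at h2
  refine ⟨h2, ?_⟩
  rw [integral_prod _ h2, integral_prod _ hq]
  simp [Real.pi_pos.le, integral_const_mul]

lemma energy_estimate {n : ℕ} {G : Set (Fin n → ℝ)} (hG : IsOpen G)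
    {W Q : (Fin n → ℝ) × ℝ → ℝ} (hW : ContDiff ℝ 2 W) (hs : HasCompactSupport W)
    (hW0 : ∀ p ∉ G ×ˢ Set.Ioo 0 π, W p = 0) {l c : ℝ} (hl : 0 ≤ l) (hc : 0 ≤ c)
    (hQ : ∀ p ∈ G ×ˢ Set.Ioo 0 π,
      |Q p - (∑ j, dirDeriv2 W (dirX j) p) - dirDeriv2 W dirY p| ≤
        l * |W p| + c * ∫ z in Set.Ioo 0 π, (l * |W (p.1, z)| + |fderiv ℝ W (p.1, z) dirY|))
    (hi : IntegrableOn (fun p => W p * Q p) (G ×ˢ Set.Ioo 0 π)) :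
    ∫ p in G ×ˢ Set.Ioo 0 π, W p * Q p ≤
      (l + c * l * π + c^2 * π^2 / 2) * ∫ p in G ×ˢ Set.Ioo 0 π, (W p)^2 := by
  set D := G ×ˢ Set.Ioo (0:ℝ) π with hD
  have hDm : MeasurableSet D := (hG.prod isOpen_Ioo).measurableSet
  have hWc := hW.continuous
  have hYc : Continuous (fun p => fderiv ℝ W p dirY) := (contDiff_dirDeriv hW dirY).continuous
  have hYs : HasCompactSupport (fun p => fderiv ℝ W p dirY) := hs.fderiv_apply ℝ dirY
  have hW2 : Integrable (fun p => (W p)^2) := by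
    simpa only [sq] using integrable_mul_of_compactSupport (μ := volume) hWc hWc hs
  have hY2 : Integrable (fun p => (fderiv ℝ W p dirY)^2) := by
    simpa only [sq] using integrable_mul_of_compactSupport (μ := volume) hYc hYc hYs
  have hLj : ∀ v, Integrable (fun p => W p * dirDeriv2 W v p) := fun v =>
    integrable_mul_of_compactSupport hWc (continuous_dirDeriv2 hW v) hs
  obtain ⟨hfW, hfWe⟩ := integral_fibre (G := G) hW2.integrableOn
  obtain ⟨hfY, hfYe⟩ := integral_fibre (G := G) hY2.integrableOn
  -- Young's inequality, with half of the `y`-derivative left for absorption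
  have hpt : ∀ p ∈ D, W p * Q p ≤ (∑ j, W p * dirDeriv2 W (dirX j) p) + W p * dirDeriv2 W dirY p
      + (l + c * l * π / 2 + c^2 * π^2 / 2) * (W p)^2
      + (c * l / 2) * (∫ z in Set.Ioo 0 π, (W (p.1, z))^2)
      + (1 / (2 * π)) * ∫ z in Set.Ioo 0 π, (fderiv ℝ W (p.1, z) dirY)^2 := by
    intro p hp
    have hIcc : ∀ {F : (Fin n → ℝ) × ℝ → ℝ}, Continuous F →
        Integrable (fun z => F (p.1, z)) (volume.restrict (Set.Ioo 0 π)) := by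
      intro F hF
      have : Continuous (fun z => F (p.1, z)) := by fun_prop
      exact (this.integrableOn_Icc (a := 0) (b := π)).mono_set Set.Ioo_subset_Icc_self
    have hy : |W p| * (c * ∫ z in Set.Ioo 0 π, (l * |W (p.1, z)| + |fderiv ℝ W (p.1, z) dirY|)) ≤
        (c * l * π / 2 + c^2 * π^2 / 2) * (W p)^2
        + (c * l / 2) * (∫ z in Set.Ioo 0 π, (W (p.1, z))^2)
        + (1 / (2 * π)) * ∫ z in Set.Ioo 0 π, (fderiv ℝ W (p.1, z) dirY)^2 := by
      have e : (c * l * π / 2 + c^2 * π^2 / 2) * (W p)^2 =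
          ∫ z in Set.Ioo 0 π, (c * l / 2 + c^2 * π / 2) * (W p)^2 := by
        simp [Real.pi_pos.le]; ring
      have i1 := integrable_const (μ := volume.restrict (Set.Ioo 0 π))
        ((c * l / 2 + c^2 * π / 2) * (W p)^2)
      have i2 := (hIcc (F := fun q => (W q)^2) (hWc.pow 2)).const_mul (c * l / 2)
      have i3 := (hIcc (F := fun q => (fderiv ℝ W q dirY)^2) (hYc.pow 2)).const_mul (1 / (2 * π))
      rw [e, ← integral_const_mul, ← integral_const_mul, ← integral_const_mul, ← integral_const_mul,
        ← integral_add' i1 i2, ← integral_add' (i1.add i2) i3]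
      apply integral_mono
      · refine ((hIcc (F := fun q => l * |W q| + |fderiv ℝ W q dirY|) ?_).const_mul c).const_mul _
        exact (continuous_const.mul hWc.abs).add hYc.abs
      · exact (i1.add i2).add i3
      · intro z
        have h1 : |W p| * |W (p.1, z)| ≤ ((W p)^2 + (W (p.1, z))^2) / 2 := by
          nlinarith [sq_nonneg (|W p| - |W (p.1, z)|), sq_abs (W p), sq_abs (W (p.1, z))]
        have h2 : c * (|W p| * |fderiv ℝ W (p.1, z) dirY|) ≤
            c^2 * π / 2 * (W p)^2 + 1 / (2 * π) * (fderiv ℝ W (p.1, z) dirY)^2 := by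
          set Y := fderiv ℝ W (p.1, z) dirY
          have hπ := Real.pi_pos
          have : c^2 * π / 2 * (W p)^2 + 1 / (2 * π) * Y^2 - c * (|W p| * |Y|) =
              (c * π * |W p| - |Y|)^2 / (2 * π) := by
            rw [← sq_abs (W p), ← sq_abs Y]; field_simp; ring
          have h3 : 0 ≤ (c * π * |W p| - |Y|)^2 / (2 * π) := by positivity
          linarith
        have h4 := mul_le_mul_of_nonneg_left h1 (mul_nonneg hc hl)
        simp only [Pi.add_apply]
        nlinarith
    have hab : W p * (Q p - (∑ j, dirDeriv2 W (dirX j) p) - dirDeriv2 W dirY p) ≤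
        |W p| * (l * |W p| + c * ∫ z in Set.Ioo 0 π,
          (l * |W (p.1, z)| + |fderiv ℝ W (p.1, z) dirY|)) := by
      apply (le_abs_self _).trans
      rw [abs_mul]
      exact mul_le_mul_of_nonneg_left (hQ p hp) (abs_nonneg _)
    have e2 : |W p| * (l * |W p|) = l * (W p)^2 := by rw [← sq_abs (W p)]; ring
    rw [mul_add, e2] at hab
    rw [← Finset.mul_sum]
    have e3 : W p * Q p = W p * (Q p - (∑ j, dirDeriv2 W (dirX j) p) - dirDeriv2 W dirY p) +
        W p * (∑ j, dirDeriv2 W (dirX j) p) + W p * dirDeriv2 W dirY p := by ring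
    linarith
  have I1 : IntegrableOn (fun p => ∑ j, W p * dirDeriv2 W (dirX j) p) D :=
    (integrable_finsetSum _ fun j _ => hLj (dirX j)).integrableOn
  have I2 : IntegrableOn (fun p => W p * dirDeriv2 W dirY p) D := (hLj dirY).integrableOn
  have I3 := (hW2.integrableOn (s := D)).const_mul (l + c * l * π / 2 + c^2 * π^2 / 2)
  have I4 := hfW.const_mul (c * l / 2)
  have I5 := hfY.const_mul (1 / (2 * π))
  have hmono := setIntegral_mono_on hi ((((I1.add I2).add I3).add I4).add I5) hDm hpt
  refine hmono.trans ?_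
  rw [integral_add' (((I1.add I2).add I3).add I4) I5, integral_add' ((I1.add I2).add I3) I4,
    integral_add' (I1.add I2) I3, integral_add' I1 I2, integral_const_mul, integral_const_mul,
    integral_const_mul, hfWe, hfYe, integral_finsetSum _ (fun j _ => (hLj (dirX j)).integrableOn)]
  have hfull : ∀ v, ∫ p in D, W p * dirDeriv2 W v p = - ∫ p, (fderiv ℝ W p v)^2 := by
    intro v
    haveI : (volume : Measure ((Fin n → ℝ) × ℝ)).IsAddHaarMeasure := by
      rw [Measure.volume_eq_prod]; infer_instance
    rw [setIntegral_eq_integral_of_forall_compl_eq_zero (fun p hp => by rw [hW0 p hp, zero_mul]),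
      integral_mul_dirDeriv2 hW hs v]
  have hX : ∑ j, ∫ p in D, W p * dirDeriv2 W (dirX j) p ≤ 0 := by
    apply Finset.sum_nonpos
    intro j _
    rw [hfull, neg_nonpos]
    exact integral_nonneg fun p => sq_nonneg _
  have hY : ∫ p in D, (fderiv ℝ W p dirY)^2 ≤ ∫ p, (fderiv ℝ W p dirY)^2 :=
    setIntegral_le_integral hY2 (Filter.Eventually.of_forall fun p => sq_nonneg _)
  have hY0 : 0 ≤ ∫ p, (fderiv ℝ W p dirY)^2 := integral_nonneg fun p => sq_nonneg _
  rw [hfull dirY]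
  have e5 : 1 / (2 * π) * (π * ∫ p in D, (fderiv ℝ W p dirY)^2) =
      (∫ p in D, (fderiv ℝ W p dirY)^2) / 2 := by
    have := Real.pi_pos; field_simp
  rw [e5]
  linarith

/-! ### The source term -/

/-- The sources `f hᵢ` of two solutions at a point `(t, x, y)`, with `F = (f, ω)`, differ by at
most a constant times the `L¹(0, π)` norms of the differences of the solutions and of their
`y`-derivatives. -/
lemma source_bound {g1 g2 d1 d2 W ω ω' : ℝ → ℝ} {a F fy κ B l : ℝ}
    (hg1 : ContinuousOn g1 (Set.Icc 0 π)) (hg2 : ContinuousOn g2 (Set.Icc 0 π))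
    (hd1 : Continuous d1) (hd2 : Continuous d2) (hW : Continuous W)
    (hω : ContinuousOn ω (Set.Icc 0 π)) (hω' : ContinuousOn ω' (Set.Icc 0 π))
    (hB : ∀ z ∈ Set.Icc 0 π, |ω z| ≤ B) (hB' : ∀ z ∈ Set.Icc 0 π, |ω' z| ≤ B)
    (hg : ∀ z ∈ Set.Icc 0 π, |g1 z - g2 z| ≤ l * |W z|)
    (hF : F ≠ 0) (hfy : |fy| ≤ κ * |F|) (hκ : 0 ≤ κ) :
    |fy * ((a - l2ip g1 ω + l2ip d1 ω') / F) - fy * ((a - l2ip g2 ω + l2ip d2 ω') / F)| ≤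
      κ * B * ∫ z in Set.Ioo 0 π, (l * |W z| + |d1 z - d2 z|) := by
  have hint : ∀ {F : ℝ → ℝ}, ContinuousOn F (Set.Icc 0 π) →
      Integrable F (volume.restrict (Set.Ioo 0 π)) := fun hF =>
    (hF.integrableOn_Icc).mono_set Set.Ioo_subset_Icc_self
  have e : fy * ((a - l2ip g1 ω + l2ip d1 ω') / F) - fy * ((a - l2ip g2 ω + l2ip d2 ω') / F) =
      (fy / F) * ∫ z in Set.Ioo 0 π, ((d1 z - d2 z) * ω' z - (g1 z - g2 z) * ω z) := by
    have i1 : Integrable (fun z => g1 z * ω z) (volume.restrict (Set.Ioo 0 π)) :=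
      hint (hg1.mul hω)
    have i2 : Integrable (fun z => g2 z * ω z) (volume.restrict (Set.Ioo 0 π)) :=
      hint (hg2.mul hω)
    have i3 : Integrable (fun z => d1 z * ω' z) (volume.restrict (Set.Ioo 0 π)) :=
      hint (hd1.continuousOn.mul hω')
    have i4 : Integrable (fun z => d2 z * ω' z) (volume.restrict (Set.Ioo 0 π)) :=
      hint (hd2.continuousOn.mul hω')
    have i34 : Integrable (fun z => d1 z * ω' z - d2 z * ω' z)
      (volume.restrict (Set.Ioo 0 π)) := i3.sub i4
    have i12 : Integrable (fun z => g1 z * ω z - g2 z * ω z)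
      (volume.restrict (Set.Ioo 0 π)) := i1.sub i2
    have e1 : ∫ z in Set.Ioo 0 π, ((d1 z - d2 z) * ω' z - (g1 z - g2 z) * ω z) =
        (l2ip d1 ω' - l2ip d2 ω') - (l2ip g1 ω - l2ip g2 ω) := by
      unfold l2ip
      rw [← integral_sub i3 i4, ← integral_sub i1 i2, ← integral_sub i34 i12]
      congr 1; ext z; ring
    rw [e1]
    field_simp
    ring
  rw [e, abs_mul]
  have hr : |fy / F| ≤ κ := by
    rw [abs_div, div_le_iff₀ (abs_pos.mpr hF)]; exact hfy
  have hbd : |∫ z in Set.Ioo 0 π, ((d1 z - d2 z) * ω' z - (g1 z - g2 z) * ω z)| ≤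
      ∫ z in Set.Ioo 0 π, B * (l * |W z| + |d1 z - d2 z|) := by
    rw [← Real.norm_eq_abs]
    apply norm_integral_le_of_norm_le
    · exact hint (by fun_prop)
    · filter_upwards [ae_restrict_mem measurableSet_Ioo] with z hz
      have hz' := Set.Ioo_subset_Icc_self hz
      calc _ ≤ |d1 z - d2 z| * |ω' z| + |g1 z - g2 z| * |ω z| := by
            rw [← abs_mul, ← abs_mul]; exact abs_sub _ _
        _ ≤ |d1 z - d2 z| * B + (l * |W z|) * B := by
            have h1 := hg z hz'
            have h2 := hB z hz'
            have h3 := hB' z hz'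
            have : 0 ≤ l * |W z| := (abs_nonneg _).trans h1
            gcongr
        _ = _ := by ring
  rw [integral_const_mul] at hbd
  calc _ ≤ κ * (B * ∫ z in Set.Ioo 0 π, (l * |W z| + |d1 z - d2 z|)) :=
        mul_le_mul hr hbd (abs_nonneg _) hκ
    _ = _ := by ring

/-- Separate continuity together with a uniform Lipschitz bound gives continuity of the
composition with a continuous function. -/
lemma continuousOn_lipschitz_comp {X : Type*} [TopologicalSpace X] {S : Set X} {g : X → ℝ → ℝ}
    {v : X → ℝ} {l : ℝ} (hg : ∀ u, ContinuousOn (fun x => g x u) S)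
    (hl : ∀ x ∈ S, ∀ u v, |g x u - g x v| ≤ l * |u - v|) (hv : ContinuousOn v S) :
    ContinuousOn (fun x => g x (v x)) S := by
  intro x hx
  have h1 : Filter.Tendsto (fun z => g z (v x)) (nhdsWithin x S) (nhds (g x (v x))) := hg (v x) x hx
  have h2 : Filter.Tendsto (fun z => g z (v z) - g z (v x)) (nhdsWithin x S) (nhds 0) := by
    apply squeeze_zero_norm' (a := fun z => l * |v z - v x|)
    · filter_upwards [self_mem_nhdsWithin] with z hz using hl z hz _ _
    · have h3 : Filter.Tendsto v (nhdsWithin x S) (nhds (v x)) := hv x hx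
      have := ((h3.sub_const (v x)).abs).const_mul l
      simpa using this
  have := h2.add h1
  simpa [ContinuousWithinAt] using this

/-- Uniqueness of the classical solution of the inverse problem: two classical
solutions `u₁`, `u₂` of `D_t^α u - Δ_x u - u_{yy} = g(t,x,y,u) + f(t,x,y) h(t,x)`
(with `h` given by the quotient formula) sharing the same initial datum `φ`
coincide a.e. in `D` for every `t ∈ [0,T]`, and the corresponding source
coefficients `h₁`, `h₂` coincide on `[0,T] × G`. -/
theorem inverse_problem_uniqueness
    (T α : ℝ) (hT : 0 < T) (hα : 0 < α) (hα1 : α < 1) (n : ℕ) (hn : 1 ≤ n)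
    (G : Set (Fin n → ℝ)) (hGopen : IsOpen G) (hGbdd : Bornology.IsBounded G)
    -- ω ∈ C¹([0,π]) with ω(0) = ω(π) = 0 and ‖ω'‖ > 0
    (ω ω' : ℝ → ℝ)
    (hω_diff : ∀ y ∈ Set.Icc (0:ℝ) π, HasDerivAt ω (ω' y) y)
    (hω'_cont : ContinuousOn ω' (Set.Icc 0 π))
    (hω0 : ω 0 = 0) (hωπ : ω π = 0)
    (hω'_pos : 0 < l2sq ω')
    (f_M ℓ₀ : ℝ) (hfM : 0 < f_M) (hℓ₀ : 0 < ℓ₀)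
    -- f continuous, (f(t,x,·),ω) ≠ 0, |f| ≤ (f_M/√π)|(f(t,x,·),ω)|
    (f : ℝ → (Fin n → ℝ) → ℝ → ℝ)
    (hf_cont : ContinuousOn (fun p : ℝ × (Fin n → ℝ) × ℝ => f p.1 p.2.1 p.2.2)
      (Set.Icc 0 T ×ˢ closure G ×ˢ Set.Icc 0 π))
    (hf_ne : ∀ t ∈ Set.Icc (0:ℝ) T, ∀ x ∈ closure G, l2ip (f t x) ω ≠ 0)
    (hf_bd : ∀ t ∈ Set.Icc (0:ℝ) T, ∀ x ∈ closure G, ∀ y ∈ Set.Icc (0:ℝ) π,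
      |f t x y| ≤ (f_M / Real.sqrt π) * |l2ip (f t x) ω|)
    -- g continuous and ℓ₀-Lipschitz in the last variable
    (g : ℝ → (Fin n → ℝ) → ℝ → ℝ → ℝ)
    (hg_cont : ∀ u : ℝ, ContinuousOn (fun p : ℝ × (Fin n → ℝ) × ℝ => g p.1 p.2.1 p.2.2 u)
      (Set.Icc 0 T ×ˢ closure G ×ˢ Set.Icc 0 π))
    (hg_lip : ∀ t ∈ Set.Icc (0:ℝ) T, ∀ x ∈ closure G, ∀ y ∈ Set.Icc (0:ℝ) π,
      ∀ u v : ℝ, |g t x y u - g t x y v| ≤ ℓ₀ * |u - v|)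
    -- a continuous
    (a : ℝ → (Fin n → ℝ) → ℝ)
    (ha_cont : ContinuousOn (fun p : ℝ × (Fin n → ℝ) => a p.1 p.2)
      (Set.Icc 0 T ×ˢ closure G))
    (φ : (Fin n → ℝ) → ℝ → ℝ)
    (hφ_L2 : IntegrableOn (fun p : (Fin n → ℝ) × ℝ => (φ p.1 p.2) ^ 2)
      (G ×ˢ Set.Ioo 0 π))
    -- the classical solution u1 with time derivative ut1 and initial datum φ
    (u1 ut1 : ℝ → (Fin n → ℝ) → ℝ → ℝ)
    (hu1_bdd : ∃ C : ℝ, ∀ t ∈ Set.Icc (0:ℝ) T, ∀ x ∈ closure G,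
      ∀ y ∈ Set.Icc (0:ℝ) π, |u1 t x y| ≤ C)
    (hu1_cont : ContinuousOn (fun p : ℝ × (Fin n → ℝ) × ℝ => u1 p.1 p.2.1 p.2.2)
      (Set.Icc 0 T ×ˢ closure G ×ˢ Set.Icc 0 π))
    (hu1_space : ∀ t ∈ Set.Icc (0:ℝ) T,
      ContDiffOn ℝ 2 (fun p : (Fin n → ℝ) × ℝ => u1 t p.1 p.2)
        (closure G ×ˢ Set.Icc 0 π))
    (hu1_supp : ∃ K : Set ((Fin n → ℝ) × ℝ), IsCompact K ∧ K ⊆ G ×ˢ Set.Ioo 0 π ∧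
      ∀ t ∈ Set.Icc (0:ℝ) T, ∀ p : (Fin n → ℝ) × ℝ, p ∉ K → u1 t p.1 p.2 = 0)
    (hu1_t : ∀ t ∈ Set.Ioc (0:ℝ) T, ∀ x ∈ closure G, ∀ y ∈ Set.Icc (0:ℝ) π,
      HasDerivAt (fun s => u1 s x y) (ut1 t x y) t)
    (hut1_cont : ∀ x ∈ closure G, ∀ y ∈ Set.Icc (0:ℝ) π,
      ContinuousOn (fun s => ut1 s x y) (Set.Ioc 0 T))
    (hut1_int : IntegrableOn (fun q : ℝ × ((Fin n → ℝ) × ℝ) => ut1 q.1 q.2.1 q.2.2)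
      (Set.Ioc 0 T ×ˢ G ×ˢ Set.Ioo 0 π))
    (hu10 : ∀ x y, u1 0 x y = φ x y)
    (hPDE1 : ∀ t ∈ Set.Ioc (0:ℝ) T, ∀ x ∈ G, ∀ y ∈ Set.Ioo (0:ℝ) π,
      caputo α (fun s => ut1 s x y) t
        - (∑ j, iteratedDeriv 2 (fun s => u1 t (Function.update x j s) y) (x j))
        - iteratedDeriv 2 (u1 t x) y
      = g t x y (u1 t x y)
        + f t x y *
          ((a t x - l2ip (fun z => g t x z (u1 t x z)) ω
              + l2ip (fun z => deriv (u1 t x) z) ω') / l2ip (f t x) ω))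
    -- the classical solution u2 with time derivative ut2 and initial datum φ
    (u2 ut2 : ℝ → (Fin n → ℝ) → ℝ → ℝ)
    (hu2_bdd : ∃ C : ℝ, ∀ t ∈ Set.Icc (0:ℝ) T, ∀ x ∈ closure G,
      ∀ y ∈ Set.Icc (0:ℝ) π, |u2 t x y| ≤ C)
    (hu2_cont : ContinuousOn (fun p : ℝ × (Fin n → ℝ) × ℝ => u2 p.1 p.2.1 p.2.2)
      (Set.Icc 0 T ×ˢ closure G ×ˢ Set.Icc 0 π))
    (hu2_space : ∀ t ∈ Set.Icc (0:ℝ) T,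
      ContDiffOn ℝ 2 (fun p : (Fin n → ℝ) × ℝ => u2 t p.1 p.2)
        (closure G ×ˢ Set.Icc 0 π))
    (hu2_supp : ∃ K : Set ((Fin n → ℝ) × ℝ), IsCompact K ∧ K ⊆ G ×ˢ Set.Ioo 0 π ∧
      ∀ t ∈ Set.Icc (0:ℝ) T, ∀ p : (Fin n → ℝ) × ℝ, p ∉ K → u2 t p.1 p.2 = 0)
    (hu2_t : ∀ t ∈ Set.Ioc (0:ℝ) T, ∀ x ∈ closure G, ∀ y ∈ Set.Icc (0:ℝ) π,
      HasDerivAt (fun s => u2 s x y) (ut2 t x y) t)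
    (hut2_cont : ∀ x ∈ closure G, ∀ y ∈ Set.Icc (0:ℝ) π,
      ContinuousOn (fun s => ut2 s x y) (Set.Ioc 0 T))
    (hut2_int : IntegrableOn (fun q : ℝ × ((Fin n → ℝ) × ℝ) => ut2 q.1 q.2.1 q.2.2)
      (Set.Ioc 0 T ×ˢ G ×ˢ Set.Ioo 0 π))
    (hu20 : ∀ x y, u2 0 x y = φ x y)
    (hPDE2 : ∀ t ∈ Set.Ioc (0:ℝ) T, ∀ x ∈ G, ∀ y ∈ Set.Ioo (0:ℝ) π,
      caputo α (fun s => ut2 s x y) t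
        - (∑ j, iteratedDeriv 2 (fun s => u2 t (Function.update x j s) y) (x j))
        - iteratedDeriv 2 (u2 t x) y
      = g t x y (u2 t x y)
        + f t x y *
          ((a t x - l2ip (fun z => g t x z (u2 t x z)) ω
              + l2ip (fun z => deriv (u2 t x) z) ω') / l2ip (f t x) ω))
    -- t ↦ ‖u₁(t,·,·) - u₂(t,·,·)‖²_{L²(D)} is absolutely continuous on [0,T]
    (N' : ℝ → ℝ) (hN'_int : IntegrableOn N' (Set.Ioo 0 T))
    (hN_AC : ∀ t ∈ Set.Icc (0:ℝ) T,
      (∫ x in G, ∫ y in Set.Ioo (0:ℝ) π, (u1 t x y - u2 t x y) ^ 2)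
        = (∫ x in G, ∫ y in Set.Ioo (0:ℝ) π, (u1 0 x y - u2 0 x y) ^ 2)
          + ∫ s in (0:ℝ)..t, N' s) :
    ∀ t ∈ Set.Icc (0:ℝ) T,
      (∀ᵐ p ∂(volume.restrict (G ×ˢ Set.Ioo (0:ℝ) π)),
        u1 t p.1 p.2 = u2 t p.1 p.2) ∧
      ∀ x ∈ G,
        (a t x - l2ip (fun z => g t x z (u1 t x z)) ω
            + l2ip (fun z => deriv (u1 t x) z) ω') / l2ip (f t x) ω
          = (a t x - l2ip (fun z => g t x z (u2 t x z)) ω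
            + l2ip (fun z => deriv (u2 t x) z) ω') / l2ip (f t x) ω := by
  -- the two solutions at a fixed time are globally `C²` with compact support
  set D : Set ((Fin n → ℝ) × ℝ) := G ×ˢ Set.Ioo (0:ℝ) π with hDdef
  have hDopen : IsOpen D := hGopen.prod isOpen_Ioo
  have hDm : MeasurableSet D := hDopen.measurableSet
  have hDsub : D ⊆ closure G ×ˢ Set.Icc 0 π :=
    Set.prod_mono subset_closure Set.Ioo_subset_Icc_self
  obtain ⟨C1, hC1⟩ := hu1_bdd
  obtain ⟨C2, hC2⟩ := hu2_bdd
  obtain ⟨K1, hK1, hK1D, hK10⟩ := hu1_supp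
  obtain ⟨K2, hK2, hK2D, hK20⟩ := hu2_supp
  have hU1 : ∀ t ∈ Set.Icc (0:ℝ) T, ContDiff ℝ 2 (fun p : (Fin n → ℝ) × ℝ => u1 t p.1 p.2) ∧
      HasCompactSupport (fun p : (Fin n → ℝ) × ℝ => u1 t p.1 p.2) := fun t ht =>
    contDiff_of_support hDopen hDsub hK1 hK1D (hu1_space t ht) (hK10 t ht)
  have hU2 : ∀ t ∈ Set.Icc (0:ℝ) T, ContDiff ℝ 2 (fun p : (Fin n → ℝ) × ℝ => u2 t p.1 p.2) ∧
      HasCompactSupport (fun p : (Fin n → ℝ) × ℝ => u2 t p.1 p.2) := fun t ht =>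
    contDiff_of_support hDopen hDsub hK2 hK2D (hu2_space t ht) (hK20 t ht)
  have hoff : ∀ t ∈ Set.Icc (0:ℝ) T, ∀ p ∉ D, u1 t p.1 p.2 = 0 ∧ u2 t p.1 p.2 = 0 :=
    fun t ht p hp => ⟨hK10 t ht p fun h => hp (hK1D h), hK20 t ht p fun h => hp (hK2D h)⟩
  haveI hfin : IsFiniteMeasure (volume.restrict D) := by
    constructor
    rw [Measure.restrict_apply_univ]
    exact (hGbdd.prod (Metric.isBounded_Ioo 0 π)).measure_lt_top
  have hωc : ContinuousOn ω (Set.Icc 0 π) := fun y hy =>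
    (hω_diff y hy).continuousAt.continuousWithinAt
  obtain ⟨B, hB, hB'⟩ : ∃ B, (∀ z ∈ Set.Icc 0 π, |ω z| ≤ B) ∧ (∀ z ∈ Set.Icc 0 π, |ω' z| ≤ B) := by
    obtain ⟨b1, hb1⟩ := isCompact_Icc.exists_bound_of_continuousOn hωc
    obtain ⟨b2, hb2⟩ := isCompact_Icc.exists_bound_of_continuousOn hω'_cont
    exact ⟨max b1 b2, fun z hz => (hb1 z hz).trans (le_max_left _ _),
      fun z hz => (hb2 z hz).trans (le_max_right _ _)⟩
  have hB0 : 0 ≤ B := (abs_nonneg _).trans (hB 0 ⟨le_rfl, Real.pi_pos.le⟩)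
  set κ := f_M / Real.sqrt π with hκ
  have hκ0 : 0 ≤ κ := by positivity
  -- the equation satisfied by the difference, as a pointwise inequality
  have hbound : ∀ t ∈ Set.Ioc (0:ℝ) T, ∀ p ∈ D,
      |(caputo α (fun s => ut1 s p.1 p.2) t - caputo α (fun s => ut2 s p.1 p.2) t)
        - (∑ j, dirDeriv2 (fun q : (Fin n → ℝ) × ℝ => u1 t q.1 q.2 - u2 t q.1 q.2) (dirX j) p)
        - dirDeriv2 (fun q : (Fin n → ℝ) × ℝ => u1 t q.1 q.2 - u2 t q.1 q.2) dirY p| ≤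
      ℓ₀ * |u1 t p.1 p.2 - u2 t p.1 p.2| + (κ * B) * ∫ z in Set.Ioo 0 π,
        (ℓ₀ * |u1 t p.1 z - u2 t p.1 z| +
          |fderiv ℝ (fun q : (Fin n → ℝ) × ℝ => u1 t q.1 q.2 - u2 t q.1 q.2) (p.1, z) dirY|) := by
    rintro t ht ⟨x, y⟩ ⟨hx, hy⟩
    have htI : t ∈ Set.Icc (0:ℝ) T := ⟨ht.1.le, ht.2⟩
    have hx' : x ∈ closure G := subset_closure hx
    have hy' := Set.Ioo_subset_Icc_self hy
    have c1 := (hU1 t htI).1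
    have c2 := (hU2 t htI).1
    have P1 := hPDE1 t ht x hx y hy
    have P2 := hPDE2 t ht x hx y hy
    have sX : ∀ {u : (Fin n → ℝ) → ℝ → ℝ}, ContDiff ℝ 2 (fun p : (Fin n → ℝ) × ℝ => u p.1 p.2) →
        ∀ j, iteratedDeriv 2 (fun s => u (Function.update x j s) y) (x j) =
          dirDeriv2 (fun p : (Fin n → ℝ) × ℝ => u p.1 p.2) (dirX j) (x, y) := by
      intro u hu j
      have := iteratedDeriv_two_slice hu (fun s => hasDerivAt_lineX x y j s) (x j)
      rwa [Function.update_eq_self] at this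
    have sY : ∀ {u : (Fin n → ℝ) → ℝ → ℝ}, ContDiff ℝ 2 (fun p : (Fin n → ℝ) × ℝ => u p.1 p.2) →
        iteratedDeriv 2 (u x) y =
          dirDeriv2 (fun p : (Fin n → ℝ) × ℝ => u p.1 p.2) dirY (x, y) := by
      intro u hu
      exact iteratedDeriv_two_slice hu (fun s => hasDerivAt_lineY x s) y
    have sD : ∀ {u : (Fin n → ℝ) → ℝ → ℝ}, ContDiff ℝ 2 (fun p : (Fin n → ℝ) × ℝ => u p.1 p.2) →
        ∀ z, deriv (u x) z = fderiv ℝ (fun p : (Fin n → ℝ) × ℝ => u p.1 p.2) (x, z) dirY := by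
      intro u hu z
      exact deriv_slice hu (fun s => hasDerivAt_lineY x s) z
    simp only [sX c1, sY c1, sD c1] at P1
    simp only [sX c2, sY c2, sD c2] at P2
    simp only [dirDeriv2_sub c1 c2, fderiv_sub_apply' c1 c2, Finset.sum_sub_distrib]
    have hcu1 : Continuous (fun z => u1 t x z) :=
      c1.continuous.comp (continuous_const.prodMk continuous_id)
    have hcu2 : Continuous (fun z => u2 t x z) :=
      c2.continuous.comp (continuous_const.prodMk continuous_id)
    have hgc : ∀ {v : ℝ → ℝ}, Continuous v →
        ContinuousOn (fun z => g t x z (v z)) (Set.Icc 0 π) := by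
      intro v hv
      apply continuousOn_lipschitz_comp (g := fun z u => g t x z u) (l := ℓ₀) _ _ hv.continuousOn
      · intro u
        exact (hg_cont u).comp (f := fun z : ℝ => (t, x, z)) (by fun_prop)
          (fun z hz => ⟨htI, hx', hz⟩)
      · exact fun z hz => hg_lip t htI x hx' z hz
    have hS := source_bound (a := a t x) (F := l2ip (f t x) ω) (fy := f t x y) (κ := κ) (B := B)
      (l := ℓ₀) (W := fun z => u1 t x z - u2 t x z)
      (d1 := fun z => fderiv ℝ (fun p : (Fin n → ℝ) × ℝ => u1 t p.1 p.2) (x, z) dirY)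
      (d2 := fun z => fderiv ℝ (fun p : (Fin n → ℝ) × ℝ => u2 t p.1 p.2) (x, z) dirY)
      (hgc hcu1) (hgc hcu2)
      ((contDiff_dirDeriv c1 dirY).continuous.comp (continuous_const.prodMk continuous_id))
      ((contDiff_dirDeriv c2 dirY).continuous.comp (continuous_const.prodMk continuous_id))
      (hcu1.sub hcu2) hωc hω'_cont hB hB'
      (fun z hz => hg_lip t htI x hx' z hz _ _) (hf_ne t htI x hx') (hf_bd t htI x hx' y hy') hκ0
    have hG := hg_lip t htI x hx' y hy' (u1 t x y) (u2 t x y)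
    refine le_trans (le_of_eq ?_) ((abs_add_le _ _).trans (add_le_add hG hS))
    congr 1
    linarith
  -- integrability of the time derivatives on the product
  have hprod : ∀ {v : ℝ → (Fin n → ℝ) → ℝ → ℝ},
      IntegrableOn (fun q : ℝ × ((Fin n → ℝ) × ℝ) => v q.1 q.2.1 q.2.2)
        (Set.Ioc 0 T ×ˢ G ×ˢ Set.Ioo 0 π) →
      Integrable (fun q : ℝ × ((Fin n → ℝ) × ℝ) => v q.1 q.2.1 q.2.2)
        ((volume.restrict (Set.Ioc 0 T)).prod (volume.restrict D)) := by
    intro v hv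
    rw [Measure.prod_restrict]
    exact hv
  have hi1 := hprod hut1_int
  have hi2 := hprod hut2_int
  have hmemD : ∀ᵐ p ∂(volume.restrict D), p ∈ D := ae_restrict_mem hDm
  have hG0 : 0 < Gamma (1 - α) := Real.Gamma_pos_of_pos (by linarith)
  have htime : ∀ {u : ℝ → (Fin n → ℝ) → ℝ → ℝ},
      ContinuousOn (fun p : ℝ × (Fin n → ℝ) × ℝ => u p.1 p.2.1 p.2.2)
        (Set.Icc 0 T ×ˢ closure G ×ˢ Set.Icc 0 π) → ∀ p ∈ D,
      ContinuousOn (fun s => u s p.1 p.2) (Set.Icc 0 T) := by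
    intro u hu p hp
    exact hu.comp (f := fun s : ℝ => (s, p.1, p.2)) (by fun_prop)
      (fun s hs => ⟨hs, (hDsub hp).1, (hDsub hp).2⟩)
  have hmain : ∀ t ∈ Set.Ioc (0:ℝ) T,
      ∫ p in D, (u1 t p.1 p.2 - u2 t p.1 p.2)^2 = 0 := by
    apply energy_zero (μ := volume.restrict D) (B := |C1| + |C2|)
      (C := Gamma (1 - α) * (ℓ₀ + κ * B * ℓ₀ * π + (κ * B)^2 * π^2 / 2)) hα hα1
      (by have := Real.pi_pos; positivity)
      (w := fun t p => u1 t p.1 p.2 - u2 t p.1 p.2)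
      (wt := fun t p => ut1 t p.1 p.2 - ut2 t p.1 p.2)
    · exact hi1.sub hi2
    · rw [Measure.prod_restrict]
      apply ContinuousOn.aestronglyMeasurable _ (measurableSet_Ioc.prod hDm)
      exact (hu1_cont.sub hu2_cont).mono (Set.prod_mono Set.Ioc_subset_Icc_self hDsub)
    · intro s hs p
      by_cases hp : p ∈ D
      · have hp' := hDsub hp
        have hs' := Set.Ioc_subset_Icc_self hs
        have h1 := hC1 s hs' p.1 hp'.1 p.2 hp'.2
        have h2 := hC2 s hs' p.1 hp'.1 p.2 hp'.2
        exact (abs_sub _ _).trans (add_le_add (h1.trans (le_abs_self _)) (h2.trans (le_abs_self _)))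
      · obtain ⟨h1, h2⟩ := hoff s (Set.Ioc_subset_Icc_self hs) p hp
        simp only [h1, h2, sub_self, abs_zero]
        positivity
    · exact Filter.Eventually.of_forall fun p => by simp only [hu10, hu20, sub_self]
    · filter_upwards [hmemD] with p hp using (htime hu1_cont p hp).sub (htime hu2_cont p hp)
    · filter_upwards [hmemD] with p hp s hs
      exact (hu1_t s hs p.1 (hDsub hp).1 p.2 (hDsub hp).2).sub
        (hu2_t s hs p.1 (hDsub hp).1 p.2 (hDsub hp).2)
    · filter_upwards [hmemD] with p hp
      exact (hut1_cont p.1 (hDsub hp).1 p.2 (hDsub hp).2).sub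
        (hut2_cont p.1 (hDsub hp).1 p.2 (hDsub hp).2)
    · intro s hs hint
      have hsI := Set.Ioc_subset_Icc_self hs
      have hcap : (fun p : (Fin n → ℝ) × ℝ => (u1 s p.1 p.2 - u2 s p.1 p.2) *
            ∫ τ in Set.Ioc 0 s, (s - τ) ^ (-α) * (ut1 τ p.1 p.2 - ut2 τ p.1 p.2))
          =ᵐ[volume.restrict D] fun p => Gamma (1 - α) * ((u1 s p.1 p.2 - u2 s p.1 p.2) *
            (caputo α (fun τ => ut1 τ p.1 p.2) s - caputo α (fun τ => ut2 τ p.1 p.2) s)) := by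
        filter_upwards [hmemD, hi1.prod_left_ae, hi2.prod_left_ae] with p hp h1 h2
        have hsT : Set.Ioc 0 s ⊆ Set.Ioc 0 T := Set.Ioc_subset_Ioc_right hs.2
        have hsT' : Set.Icc 0 s ⊆ Set.Icc 0 T := Set.Icc_subset_Icc_right hs.2
        have hp' := hDsub hp
        have j1 := (alikhanov hα hα1 hs.1 ((htime hu1_cont p hp).mono hsT')
          (fun τ hτ => hu1_t τ (hsT hτ) p.1 hp'.1 p.2 hp'.2)
          ((hut1_cont p.1 hp'.1 p.2 hp'.2).mono hsT) (IntegrableOn.mono_set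
            (show IntegrableOn (fun τ => ut1 τ p.1 p.2) (Set.Ioc 0 T) volume from h1) hsT)).1
        have j2 := (alikhanov hα hα1 hs.1 ((htime hu2_cont p hp).mono hsT')
          (fun τ hτ => hu2_t τ (hsT hτ) p.1 hp'.1 p.2 hp'.2)
          ((hut2_cont p.1 hp'.1 p.2 hp'.2).mono hsT) (IntegrableOn.mono_set
            (show IntegrableOn (fun τ => ut2 τ p.1 p.2) (Set.Ioc 0 T) volume from h2) hsT)).1
        simp only [caputo, mul_sub]
        rw [integral_sub j1 j2, intervalIntegral.integral_of_le hs.1.le,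
          intervalIntegral.integral_of_le hs.1.le]
        field_simp
      have hWd := (hU1 s hsI).1.sub (hU2 s hsI).1
      have hWs : HasCompactSupport
          (fun p : (Fin n → ℝ) × ℝ => u1 s p.1 p.2 - u2 s p.1 p.2) :=
        (hU1 s hsI).2.sub (hU2 s hsI).2
      have hint' := ((hint.congr hcap).const_mul (Gamma (1 - α))⁻¹)
      simp only [inv_mul_cancel_left₀ hG0.ne'] at hint'
      have hest := energy_estimate hGopen hWd hWs
        (fun p hp => by
          obtain ⟨h1, h2⟩ := hoff s hsI p hp
          simp only [h1, h2, sub_self]) hℓ₀.le (mul_nonneg hκ0 hB0) (hbound s hs) hint'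
      rw [integral_congr_ae hcap, integral_const_mul, mul_assoc]
      exact mul_le_mul_of_nonneg_left hest hG0.le
  -- a continuous function with vanishing energy vanishes
  have hzero : ∀ t ∈ Set.Icc (0:ℝ) T, ∀ x y, u1 t x y = u2 t x y := by
    intro t ht x y
    rcases ht.1.eq_or_lt with h0 | h0
    · rw [← h0, hu10, hu20]
    have hWc : Continuous (fun p : (Fin n → ℝ) × ℝ => (u1 t p.1 p.2 - u2 t p.1 p.2)^2) :=
      ((hU1 t ht).1.continuous.sub (hU2 t ht).1.continuous).pow 2
    have hWs : HasCompactSupport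
        (fun p : (Fin n → ℝ) × ℝ => u1 t p.1 p.2 - u2 t p.1 p.2) :=
      (hU1 t ht).2.sub (hU2 t ht).2
    have h := hmain t ⟨h0, ht.2⟩
    rw [setIntegral_eq_integral_of_forall_compl_eq_zero (fun p hp => by
      obtain ⟨h1, h2⟩ := hoff t ht p hp
      simp [h1, h2])] at h
    have hWi : Integrable (fun p : (Fin n → ℝ) × ℝ => (u1 t p.1 p.2 - u2 t p.1 p.2)^2) :=
      hWc.integrable_of_hasCompactSupport (hWs.comp_left (g := fun r : ℝ => r^2) (by simp))
    rw [integral_eq_zero_iff_of_nonneg (fun p => sq_nonneg _) hWi] at h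
    have h2 := (hWc.ae_eq_iff_eq volume continuous_zero).mp h
    have h3 := congrFun h2 (x, y)
    simp only [Pi.zero_apply, sq_eq_zero_iff, sub_eq_zero] at h3
    exact h3
  intro t ht
  have hfun : u1 t = u2 t := by
    ext x y; exact hzero t ht x y
  refine ⟨Filter.Eventually.of_forall fun p => hzero t ht p.1 p.2, fun x _ => ?_⟩
  rw [hfun]
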